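/- For every b > 0, the function f_b : ℝ → ℝ defined by f_b(x) = −exp(−b/(1−x)) for x < 1 and f_b(x) = 0 for x ≥ 1 is of class C^∞ on ℝ; moreover, there exists b₀ > 0 such that for every b ≥ b₀ one has f_b'(x) > 0, f_b''(x) < 0, f_b'''(x) > 0 and f_b⁽⁴⁾(x) < 0 for every x with 0 ≤ x < 1. -/

import Mathlib

/-- Aubin's explicit cutoff profile: `f_b x = -exp (-b/(1-x))` for `x < 1`, and `0` for `x ≥ 1`. -/
noncomputable def aubinProfile (b : ℝ) : ℝ → ℝ :=
  fun x => if x < 1 then -Real.exp (-b / (1 - x)) else 0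

lemma aubin_step (b : ℝ) (F : ℝ → ℝ) (P P' : ℝ → ℝ)
    (hP : ∀ u, HasDerivAt P (P' u) u)
    (hF : ∀ x < 1, F x = P (1 - x)⁻¹ * Real.exp (-b * (1 - x)⁻¹)) :
    ∀ x < 1, deriv F x =
      ((1 - x)⁻¹ ^ 2 * (P' (1 - x)⁻¹ - b * P (1 - x)⁻¹)) * Real.exp (-b * (1 - x)⁻¹) := by
  intro x hx
  have hne : (1 - x) ≠ 0 := by linarith
  have hev : F =ᶠ[nhds x] fun y => P (1 - y)⁻¹ * Real.exp (-b * (1 - y)⁻¹) := by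
    filter_upwards [Iio_mem_nhds hx] with y hy using hF y hy
  rw [hev.deriv_eq]
  have hu : HasDerivAt (fun y : ℝ => (1 - y)⁻¹) ((1 - x)⁻¹ ^ 2) x := by
    have h0 : HasDerivAt (fun y : ℝ => 1 - y) (-1) x := (hasDerivAt_id' x).const_sub 1
    have h := h0.fun_inv hne
    have e : (1 - x)⁻¹ ^ 2 = - -1 / (1 - x) ^ 2 := by rw [inv_pow, neg_neg, one_div]
    rw [e]
    exact h
  have h1 : HasDerivAt (fun y : ℝ => P (1 - y)⁻¹) (P' (1 - x)⁻¹ * (1 - x)⁻¹ ^ 2) x :=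
    (hP (1 - x)⁻¹).comp x hu
  have h2 := h1.mul ((hu.const_mul (-b)).exp)
  refine h2.deriv.trans ?_
  ring

lemma aubin_contDiff (b : ℝ) (hb : 0 < b) : ContDiff ℝ (⊤ : ℕ∞) (aubinProfile b) := by
  have h : aubinProfile b = fun x => -expNegInvGlue ((1 - x) / b) := by
    funext x
    unfold aubinProfile expNegInvGlue
    by_cases hx : x < 1
    · have : ¬ ((1 - x) / b ≤ 0) := by
        have : 0 < (1 - x) / b := div_pos (by linarith) hb
        linarith
      rw [if_pos hx, if_neg this, inv_div, neg_div]
    · have : (1 - x) / b ≤ 0 := div_nonpos_of_nonpos_of_nonneg (by linarith) hb.le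
      rw [if_neg hx, if_pos this, neg_zero]
  rw [h]
  exact (expNegInvGlue.contDiff.comp ((contDiff_const.sub contDiff_id).div_const b)).neg

/-- For every `b > 0` the function `f_b` is `C^∞` on `ℝ`, and there is `b₀ > 0` such that
for every `b ≥ b₀` the first four derivatives of `f_b` satisfy `f' > 0`, `f'' < 0`,
`f''' > 0`, `f⁗ < 0` on `[0, 1)`. -/
theorem aubinProfile_smooth_and_sign_conditions :
    (∀ b : ℝ, 0 < b → ContDiff ℝ (⊤ : ℕ∞) (aubinProfile b)) ∧
    ∃ b₀ : ℝ, 0 < b₀ ∧ ∀ b : ℝ, b₀ ≤ b → ∀ x : ℝ, 0 ≤ x → x < 1 →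
      0 < iteratedDeriv 1 (aubinProfile b) x ∧
      iteratedDeriv 2 (aubinProfile b) x < 0 ∧
      0 < iteratedDeriv 3 (aubinProfile b) x ∧
      iteratedDeriv 4 (aubinProfile b) x < 0 := by
  refine ⟨aubin_contDiff, 12, by norm_num, ?_⟩
  intro b hb x hx0 hx1
  have hm : ∀ (c : ℝ) (n : ℕ) (u : ℝ),
      HasDerivAt (fun u : ℝ => c * u ^ n) (c * (n * u ^ (n - 1))) u :=
    fun c n u => (hasDerivAt_pow n u).const_mul c
  have d0 : ∀ x < 1, aubinProfile b x = (fun _ => (-1 : ℝ)) (1 - x)⁻¹ *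
      Real.exp (-b * (1 - x)⁻¹) := by
    intro x hx
    simp [aubinProfile, hx, div_eq_mul_inv]
  have d1 := aubin_step b _ _ (fun _ => 0) (fun u => hasDerivAt_const u _) d0
  have d1' : ∀ x < 1, deriv (aubinProfile b) x = (fun u : ℝ => b * u ^ 2) (1 - x)⁻¹ *
      Real.exp (-b * (1 - x)⁻¹) := by
    intro x hx
    rw [d1 x hx]; ring
  have d2 := aubin_step b _ _ _ (hm b 2) d1'
  have d2' : ∀ x < 1, deriv (deriv (aubinProfile b)) x =
      (fun u : ℝ => 2 * b * u ^ 3 + -b ^ 2 * u ^ 4) (1 - x)⁻¹ *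
      Real.exp (-b * (1 - x)⁻¹) := by
    intro x hx
    rw [d2 x hx]; push_cast; ring
  have d3 := aubin_step b _ (fun u : ℝ => 2 * b * u ^ 3 + -b ^ 2 * u ^ 4) _
    (fun u => (hm (2 * b) 3 u).add (hm (-b ^ 2) 4 u)) d2'
  have d3' : ∀ x < 1, deriv (deriv (deriv (aubinProfile b))) x =
      (fun u : ℝ => 6 * b * u ^ 4 + -6 * b ^ 2 * u ^ 5 + b ^ 3 * u ^ 6) (1 - x)⁻¹ *
      Real.exp (-b * (1 - x)⁻¹) := by
    intro x hx
    rw [d3 x hx]; push_cast; ring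
  have d4 := aubin_step b _
    (fun u : ℝ => 6 * b * u ^ 4 + -6 * b ^ 2 * u ^ 5 + b ^ 3 * u ^ 6) _
    (fun u => ((hm (6 * b) 4 u).add (hm (-6 * b ^ 2) 5 u)).add (hm (b ^ 3) 6 u)) d3'
  have hu1 : 1 ≤ (1 - x)⁻¹ := (one_le_inv₀ (by linarith)).2 (by linarith)
  simp only [iteratedDeriv_succ, iteratedDeriv_zero]
  rw [d1' x hx1, d2' x hx1, d3' x hx1, d4 x hx1]
  have he := Real.exp_pos (-b * (1 - x)⁻¹)
  generalize Real.exp (-b * (1 - x)⁻¹) = e at *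
  generalize (1 - x)⁻¹ = u at *
  have hu : 0 < u := by linarith
  have hb0 : 0 < b := by linarith
  have ht : 12 ≤ b * u := by nlinarith
  push_cast
  refine ⟨by positivity, ?_, ?_, ?_⟩
  · have h : 0 < b * u ^ 3 * (b * u - 2) * e :=
      mul_pos (mul_pos (by positivity) (by linarith)) he
    linarith
  · have h : 0 < b * u ^ 4 * ((b * u) * (b * u - 6) + 6) * e :=
      mul_pos (mul_pos (by positivity) (by nlinarith)) he
    linarith
  · have h : 0 < b * u ^ 5 * ((b * u) ^ 2 * (b * u - 12) + 36 * (b * u) - 24) * e := by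
      refine mul_pos (mul_pos (by positivity) ?_) he
      have : 0 ≤ (b * u) ^ 2 * (b * u - 12) := mul_nonneg (by positivity) (by linarith)
      linarith
    norm_num
    linarith
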